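/- arXiv:2408.13472 — 3 statements merged into one kernel-verified Lean document; each statement's English description precedes it below -/
import Mathlib

section
/- Let n ≥ 4 and let c_j = (C(n−2, λ−j))_{λ=0}^n ∈ ℤ^{n+1} for j = 0, 1, 2. Then the minimum of Σ_{λ=0}^n C(n,λ)·max(x_λ,0) over all nonzero integer vectors x ∈ ℤ^{n+1} orthogonal to c_0, c_1, and c_2 equals 2(n−1). -/
/-!
Put `y_λ = C(n,λ) x_λ`. Since `c_0 + 2 c_1 + c_2 = (C(n,λ))_λ`, feasibility forces `∑ y_λ = 0`, so the
objective `∑ y_λ⁺` equals `∑ y_λ⁻` and is at least `|y_λ|` for every single `λ`.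

If `x_λ ≠ 0` for some `2 ≤ λ ≤ n - 2`, the objective is therefore at least
`C(n,λ) ≥ C(n,2) = n(n-1)/2 ≥ 2(n-1)`. Otherwise `x` lives on `{0, 1, n-1, n}`, where the three
constraints read `x_0 + (n-2) x_1 = 0`, `x_1 + x_{n-1} = 0`, `(n-2) x_{n-1} + x_n = 0`; hence
`x = t (-(n-2), 1, -1, n-2)` with `t ≠ 0`, and the objective is `|t| (2n-2)`. Taking `t = 1` shows that
the bound is attained.
-/

/-- the binomial coefficient `C(a,b)` for `b : ℤ`, with the convention that it vanishes
whenever `b ∉ {0, 1, …, a}` -/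
def binomZ (a : ℕ) (b : ℤ) : ℤ := if 0 ≤ b then (a.choose b.toNat : ℤ) else 0

lemma binomZ_natCast (a b : ℕ) : binomZ a (b : ℤ) = a.choose b := by
  simp [binomZ]

lemma binomZ_of_neg (a : ℕ) {b : ℤ} (hb : b < 0) : binomZ a b = 0 := by
  simp [binomZ, hb]

/-- Pascal's rule applied twice. -/
lemma choose_add_two_eq_binomZ (k l : ℕ) :
    ((k + 2).choose l : ℤ) = binomZ k (l : ℤ) + 2 * binomZ k ((l : ℤ) - 1)
      + binomZ k ((l : ℤ) - 2) := by
  match l with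
  | 0 =>
    rw [binomZ_natCast, binomZ_of_neg _ (by simp), binomZ_of_neg _ (by simp)]
    simp
  | 1 =>
    rw [binomZ_natCast, binomZ_of_neg k (b := ((1 : ℕ) : ℤ) - 2) (by norm_num),
      show ((1 : ℕ) : ℤ) - 1 = (0 : ℕ) by norm_num, binomZ_natCast]
    simp
  | l + 2 =>
    rw [binomZ_natCast, show ((l + 2 : ℕ) : ℤ) - 1 = (l + 1 : ℕ) by push_cast; ring,
      show ((l + 2 : ℕ) : ℤ) - 2 = l by push_cast; ring, binomZ_natCast, binomZ_natCast,
      Nat.choose_succ_succ' (k + 1), Nat.choose_succ_succ' k, Nat.choose_succ_succ' k (l + 1)]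
    push_cast
    ring

lemma sum_eq_four_of_support {m : ℕ} (f : Fin (m + 3 + 1) → ℤ)
    (hf : ∀ l : Fin (m + 3 + 1), 2 ≤ (l : ℕ) → (l : ℕ) ≤ m + 1 → f l = 0) :
    ∑ l, f l = f ⟨0, by omega⟩ + f ⟨1, by omega⟩ + f ⟨m + 2, by omega⟩ + f ⟨m + 3, by omega⟩ := by
  rw [Fin.sum_univ_succ, Fin.sum_univ_succ, Fin.sum_univ_castSucc, Fin.sum_univ_castSucc,
    Finset.sum_eq_zero]
  · simp only [zero_add, ← add_assoc]
    rfl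
  · intro i _
    apply hf <;> simp

/-- The three constraints, for a vector supported on `{0, 1, n-1, n}` with `n = m + 3`. -/
lemma constraints_iff_of_support {m : ℕ} (x : Fin (m + 3 + 1) → ℤ)
    (hx : ∀ l : Fin (m + 3 + 1), 2 ≤ (l : ℕ) → (l : ℕ) ≤ m + 1 → x l = 0) :
    (∀ j : Fin 3, ∑ l : Fin (m + 3 + 1), binomZ (m + 1) ((l : ℤ) - (j : ℤ)) * x l = 0) ↔
      x ⟨0, by omega⟩ + (m + 1) * x ⟨1, by omega⟩ = 0 ∧
      x ⟨1, by omega⟩ + x ⟨m + 2, by omega⟩ = 0 ∧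
      (m + 1) * x ⟨m + 2, by omega⟩ + x ⟨m + 3, by omega⟩ = 0 := by
  have key : ∀ j : ℤ, ∑ l : Fin (m + 3 + 1), binomZ (m + 1) ((l : ℤ) - j) * x l =
      binomZ (m + 1) (0 - j) * x ⟨0, by omega⟩ + binomZ (m + 1) (1 - j) * x ⟨1, by omega⟩
      + binomZ (m + 1) (m + 2 - j) * x ⟨m + 2, by omega⟩
      + binomZ (m + 1) (m + 3 - j) * x ⟨m + 3, by omega⟩ := by
    intro j
    rw [sum_eq_four_of_support]
    · simp
    · intro l h1 h2
      rw [hx l h1 h2, mul_zero]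
  have e (z : ℤ) (b : ℕ) (h : z = b) : binomZ (m + 1) z = (m + 1).choose b := by
    rw [h, binomZ_natCast]
  have c0 : (m + 1).choose (m + 2) = 0 := Nat.choose_eq_zero_of_lt (by omega)
  have c1 : (m + 1).choose (m + 3) = 0 := Nat.choose_eq_zero_of_lt (by omega)
  have c2 : (m + 1).choose m = m + 1 := Nat.choose_succ_self_right m
  have k0 := key 0
  have k1 := key 1
  have k2 := key 2
  rw [e _ 0 (by simp), e _ 1 (by simp), e _ (m + 2) (by push_cast; ring),
    e _ (m + 3) (by push_cast; ring), c0, c1] at k0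
  rw [binomZ_of_neg _ (by norm_num), e _ 0 (by simp), e _ (m + 1) (by push_cast; ring),
    e _ (m + 2) (by push_cast; ring), c0] at k1
  rw [binomZ_of_neg _ (by norm_num), binomZ_of_neg _ (by norm_num), e _ m (by ring),
    e _ (m + 1) (by push_cast; ring), c2] at k2
  simp only [Nat.choose_zero_right, Nat.choose_one_right, Nat.choose_self] at k0 k1 k2
  rw [Fin.forall_fin_succ, Fin.forall_fin_succ, Fin.forall_fin_one]
  have z0 : (((0 : Fin 3) : ℕ) : ℤ) = 0 := rfl
  have z1 : ((((0 : Fin 2).succ : Fin 3) : ℕ) : ℤ) = 1 := rfl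
  have z2 : (((((0 : Fin 1).succ : Fin 2).succ : Fin 3) : ℕ) : ℤ) = 2 := rfl
  rw [z0, z1, z2, k0, k1, k2]
  push_cast
  simp

lemma choose_two_le_choose {n l : ℕ} (h2 : 2 ≤ l) (hl : l + 2 ≤ n) : n.choose 2 ≤ n.choose l := by
  -- `C(n, ·)` increases up to the middle; by symmetry it suffices to treat `l ≤ n / 2`.
  have mono : ∀ d, 2 + d ≤ n / 2 → n.choose 2 ≤ n.choose (2 + d) := by
    intro d
    induction d with
    | zero => simp
    | succ d ih =>
      intro h
      exact (ih (by omega)).trans (Nat.choose_le_succ_of_lt_half_left (by omega))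
  by_cases h : l ≤ n / 2
  · have := mono (l - 2) (by omega)
    rwa [show 2 + (l - 2) = l by omega] at this
  · have := mono (n - l - 2) (by omega)
    rwa [show 2 + (n - l - 2) = n - l by omega, Nat.choose_symm (by omega)] at this

/-- When the weighted sum vanishes, the positive part dominates each `|w_l x_l|`. -/
lemma weight_le_sum_pos {ι : Type*} [Fintype ι] (w x : ι → ℤ) (hw : ∀ l, 0 ≤ w l)
    (h0 : ∑ l, w l * x l = 0) (l : ι) (hl : x l ≠ 0) : w l ≤ ∑ i, w i * max (x i) 0 := by
  have hneg : ∑ i, w i * max (x i) 0 = ∑ i, w i * max (-x i) 0 := by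
    rw [← sub_eq_zero, ← Finset.sum_sub_distrib, ← h0]
    refine Finset.sum_congr rfl fun i _ => ?_
    rw [← mul_sub]
    congr 1
    omega
  have hsingle : ∀ z : ι → ℤ, 0 < z l → w l ≤ ∑ i, w i * max (z i) 0 := by
    intro z hz
    have h1 := Finset.single_le_sum (f := fun i => w i * max (z i) 0)
      (fun i _ => mul_nonneg (hw i) (le_max_right _ _)) (Finset.mem_univ l)
    have h2 : w l * 1 ≤ w l * max (z l) 0 := mul_le_mul_of_nonneg_left (by omega) (hw l)
    linarith
  rcases lt_or_gt_of_ne hl with h | h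
  · rw [hneg]
    exact hsingle (fun i => -x i) (by simpa using h)
  · exact hsingle x h

/-- The objective of a vector supported on `{0, 1, n-1, n}` with `n = m + 3`. -/
lemma objective_of_support {m : ℕ} (x : Fin (m + 3 + 1) → ℤ)
    (hx : ∀ l : Fin (m + 3 + 1), 2 ≤ (l : ℕ) → (l : ℕ) ≤ m + 1 → x l = 0) :
    ∑ l : Fin (m + 3 + 1), ((m + 3).choose (l : ℕ) : ℤ) * max (x l) 0 =
      max (x ⟨0, by omega⟩) 0 + (m + 3) * max (x ⟨1, by omega⟩) 0
      + (m + 3) * max (x ⟨m + 2, by omega⟩) 0 + max (x ⟨m + 3, by omega⟩) 0 := by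
  rw [sum_eq_four_of_support]
  · have c : (m + 3).choose (m + 2) = m + 3 := Nat.choose_succ_self_right (m + 2)
    simp only [c, Nat.choose_zero_right, Nat.choose_one_right, Nat.choose_self]
    push_cast
    ring
  · intro l h1 h2
    simp [hx l h1 h2]

/-- **Integer optimization for the `U(1)` symmetry with `2`-local gates.**  The minimum of
`∑_λ C(n,λ)·max(x_λ,0)` over nonzero integer vectors `x ∈ ℤ^{n+1}` orthogonal to
`c_j = (C(n-2, λ-j))_λ`, `j = 0,1,2`, equals `2(n-1)`. -/
theorem u1_2local_integer_optimization (n : ℕ) (hn : 4 ≤ n) :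
    IsLeast
      {s : ℤ | ∃ x : Fin (n + 1) → ℤ, x ≠ 0 ∧
        (∀ j : Fin 3, ∑ l : Fin (n + 1), binomZ (n - 2) ((l : ℤ) - (j : ℤ)) * x l = 0) ∧
        s = ∑ l : Fin (n + 1), (n.choose (l : ℕ) : ℤ) * max (x l) 0}
      (2 * ((n : ℤ) - 1)) := by
  obtain ⟨m, rfl⟩ : ∃ m, n = m + 3 := ⟨n - 3, by omega⟩
  have hm : 1 ≤ m := by omega
  rw [show m + 3 - 2 = m + 1 by omega]
  constructor
  · let x : Fin (m + 3 + 1) → ℤ := fun l =>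
      if (l : ℕ) = 0 then -(m + 1) else if (l : ℕ) = 1 then 1
      else if (l : ℕ) = m + 2 then -1 else if (l : ℕ) = m + 3 then m + 1 else 0
    have hx : ∀ l : Fin (m + 3 + 1), 2 ≤ (l : ℕ) → (l : ℕ) ≤ m + 1 → x l = 0 := by
      intro l h1 h2
      simp only [x]
      rw [if_neg (by omega), if_neg (by omega), if_neg (by omega), if_neg (by omega)]
    have x0 : x ⟨0, by omega⟩ = -(m + 1) := by simp [x]
    have x1 : x ⟨1, by omega⟩ = 1 := by simp [x]
    have x2 : x ⟨m + 2, by omega⟩ = -1 := by simp [x]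
    have x3 : x ⟨m + 3, by omega⟩ = m + 1 := by simp [x]
    refine ⟨x, ?_, (constraints_iff_of_support x hx).2 ?_, ?_⟩
    · intro h
      rw [h] at x1
      simp at x1
    · rw [x0, x1, x2, x3]
      refine ⟨?_, ?_, ?_⟩ <;> ring
    · rw [objective_of_support x hx, x0, x1, x2, x3, max_eq_right (by omega),
        max_eq_left (by omega), max_eq_right (by omega), max_eq_left (by omega)]
      push_cast
      ring
  · rintro s ⟨x, hx0, hc, rfl⟩
    by_cases hx : ∀ l : Fin (m + 3 + 1), 2 ≤ (l : ℕ) → (l : ℕ) ≤ m + 1 → x l = 0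
    · obtain ⟨h1, h2, h3⟩ := (constraints_iff_of_support x hx).1 hc
      rw [objective_of_support x hx]
      set t := x ⟨1, by omega⟩ with ht
      have e2 : x ⟨m + 2, by omega⟩ = -t := by linarith
      have e0 : x ⟨0, by omega⟩ = -((m + 1) * t) := by linarith
      have e3 : x ⟨m + 3, by omega⟩ = (m + 1) * t := by
        rw [e2] at h3
        linarith
      have ht0 : t ≠ 0 := by
        intro h
        rw [h] at e0 e2 e3
        apply hx0
        funext l
        by_cases a : 2 ≤ (l : ℕ) ∧ (l : ℕ) ≤ m + 1
        · exact hx l a.1 a.2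
        · have : l = ⟨0, by omega⟩ ∨ l = ⟨1, by omega⟩ ∨ l = ⟨m + 2, by omega⟩ ∨
              l = ⟨m + 3, by omega⟩ := by
            simp only [Fin.ext_iff]
            omega
          rcases this with rfl | rfl | rfl | rfl
          · simpa using e0
          · rw [← ht, h]
            rfl
          · simpa using e2
          · simpa using e3
      rw [e0, e2, e3]
      push_cast
      rcases lt_or_gt_of_ne ht0 with h | h
      · have a1 := le_max_left (-((m + 1) * t)) 0
        have a2 := le_max_left (-t) 0
        have b1 := le_max_right t 0
        have b2 := le_max_right (((m : ℤ) + 1) * t) 0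
        nlinarith
      · have a1 := le_max_left (((m : ℤ) + 1) * t) 0
        have a2 := le_max_left t 0
        have b1 := le_max_right (-t) 0
        have b2 := le_max_right (-(((m : ℤ) + 1) * t)) 0
        nlinarith
    · push Not at hx
      obtain ⟨l, hl2, hlm, hl⟩ := hx
      have hsum : ∑ l : Fin (m + 3 + 1), ((m + 3).choose (l : ℕ) : ℤ) * x l = 0 := by
        have d0 : ∑ l : Fin (m + 3 + 1), binomZ (m + 1) (l : ℤ) * x l = 0 := by simpa using hc 0
        have d1 : ∑ l : Fin (m + 3 + 1), binomZ (m + 1) ((l : ℤ) - 1) * x l = 0 := by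
          simpa using hc 1
        have d2 : ∑ l : Fin (m + 3 + 1), binomZ (m + 1) ((l : ℤ) - 2) * x l = 0 := by
          simpa using hc 2
        calc _ = ∑ l : Fin (m + 3 + 1), (binomZ (m + 1) (l : ℤ) * x l
              + 2 * (binomZ (m + 1) ((l : ℤ) - 1) * x l)
              + binomZ (m + 1) ((l : ℤ) - 2) * x l) := by
              refine Finset.sum_congr rfl fun l _ => ?_
              rw [choose_add_two_eq_binomZ (m + 1)]
              ring
          _ = 0 := by
              rw [Finset.sum_add_distrib, Finset.sum_add_distrib, ← Finset.mul_sum, d0, d1, d2]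
              rfl
      have hw := weight_le_sum_pos (fun l : Fin (m + 3 + 1) => ((m + 3).choose (l : ℕ) : ℤ)) x
        (fun l => by positivity) hsum l hl
      refine le_trans ?_ hw
      have hch : (m + 3).choose 2 ≤ (m + 3).choose l := choose_two_le_choose hl2 (by omega)
      have htwo : 2 * (m + 2) ≤ (m + 3).choose 2 := by
        rw [Nat.choose_two_right, Nat.le_div_iff_mul_le (by norm_num),
          show m + 3 - 1 = m + 2 by omega]
        nlinarith
      have : ((2 * (m + 2) : ℕ) : ℤ) ≤ ((m + 3).choose l : ℕ) := by
        exact_mod_cast htwo.trans hch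
      push_cast at this ⊢
      linarith
end

section
/- Let n ≥ 4 and let c_j = (C(n−3, λ−j))_{λ=0}^n ∈ ℤ^{n+1} for j = 0, 1, 2, 3. Then the minimum of Σ_{λ=0}^n C(n,λ)·max(x_λ,0) over all nonzero integer vectors x ∈ ℤ^{n+1} orthogonal to c_0, c_1, c_2, and c_3 equals n(n−2). -/
/-- Pascal's rule, for all integers `b`. -/
lemma binomZ_succ (a : ℕ) (b : ℤ) :
    binomZ (a + 1) b = binomZ a b + binomZ a (b - 1) := by
  unfold binomZ
  rcases lt_trichotomy b 0 with h | h | h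
  · rw [if_neg (by omega), if_neg (by omega), if_neg (by omega)]; rfl
  · subst h; simp
  · obtain ⟨k, rfl⟩ : ∃ k : ℕ, b = k + 1 := ⟨(b - 1).toNat, by omega⟩
    rw [if_pos (by omega), if_pos (by omega), if_pos (by omega)]
    have e1 : ((k : ℤ) + 1).toNat = k + 1 := by omega
    have e2 : ((k : ℤ) + 1 - 1).toNat = k := by omega
    rw [e1, e2, Nat.choose_succ_succ]
    push_cast; ring

/-- The absorption identity, for all integers `b`. -/
lemma binomZ_absorb (a : ℕ) (b : ℤ) :
    b * binomZ (a + 1) b = (a + 1) * binomZ a (b - 1) := by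
  unfold binomZ
  rcases lt_trichotomy b 0 with h | h | h
  · rw [if_neg (by omega), if_neg (by omega)]; simp
  · subst h; simp
  · obtain ⟨k, rfl⟩ : ∃ k : ℕ, b = k + 1 := ⟨(b - 1).toNat, by omega⟩
    rw [if_pos (by omega), if_pos (by omega)]
    have e1 : ((k : ℤ) + 1).toNat = k + 1 := by omega
    have e2 : ((k : ℤ) + 1 - 1).toNat = k := by omega
    rw [e1, e2]
    have := Nat.add_one_mul_choose_eq a k
    zify at this
    linarith

lemma binomZ_coabsorb (a : ℕ) (b : ℤ) :
    (a + 1 - b) * binomZ (a + 1) b = (a + 1) * binomZ a b := by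
  linear_combination (a + 1 : ℤ) * binomZ_succ a b - binomZ_absorb a b

lemma choose_eq_binomZ (n k : ℕ) : (n.choose k : ℤ) = binomZ n k := by
  simp [binomZ]

/-- The weighted test functions `1`, `l`, `l(n-l)`, `l(n-l)(n-2l)` as combinations of
`c_0, …, c_3`, where `n = m + 3`. -/
lemma tests (m k : ℕ) :
    ((m + 3).choose k : ℤ) = binomZ m (k - 0) + 3 * binomZ m (k - 1) + 3 * binomZ m (k - 2)
        + binomZ m (k - 3) ∧
    ((m + 3).choose k : ℤ) * k =
      (m + 3) * (binomZ m (k - 1) + 2 * binomZ m (k - 2) + binomZ m (k - 3)) ∧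
    ((m + 3).choose k : ℤ) * (k * (m + 3 - k)) =
      (m + 3) * (m + 2) * (binomZ m (k - 1) + binomZ m (k - 2)) ∧
    ((m + 3).choose k : ℤ) * (k * (m + 3 - k) * (m + 3 - 2 * k)) =
      (m + 3) * (m + 2) * (m + 1) * (binomZ m (k - 1) - binomZ m (k - 2)) := by
  rw [choose_eq_binomZ]
  have e2 : (k : ℤ) - 1 - 1 = k - 2 := by ring
  have e3 : (k : ℤ) - 2 - 1 = k - 3 := by ring
  have p1 := binomZ_succ m k
  have p2 := binomZ_succ m (k - 1)
  have p3 := binomZ_succ m (k - 2)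
  have q1 := binomZ_succ (m + 1) k
  have q2 := binomZ_succ (m + 1) (k - 1)
  have r1 := binomZ_succ (m + 2) k
  have a1 := binomZ_absorb (m + 2) k
  have a2 := binomZ_absorb (m + 1) (k - 1)
  have a3 := binomZ_absorb m (k - 1)
  have b2 := binomZ_coabsorb (m + 1) (k - 1)
  have b3 := binomZ_coabsorb m (k - 1)
  rw [e2] at p2 q2 a2 a3
  rw [e3] at p3
  push_cast at *
  refine ⟨?_, ?_, ?_, ?_⟩
  · rw [sub_zero]; linarith
  · linear_combination a1 + (m + 3 : ℤ) * (q2 + p2 + p3)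
  · linear_combination (m + 3 - k : ℤ) * a1 + (m + 3 : ℤ) * (b2 + (m + 2 : ℤ) * p2)
  · linear_combination (m + 3 - k : ℤ) * (m + 3 - 2 * k) * a1
      + (m + 3 : ℤ) * ((m + 3 - 2 * k) * b2 + (m + 2 : ℤ) * (b3 - a3))

lemma choose_le_choose_mid (j n k : ℕ) (hjk : j ≤ k) (hkn : k + j ≤ n) :
    n.choose j ≤ n.choose k := by
  have half : ∀ k, j ≤ k → k ≤ n / 2 → n.choose j ≤ n.choose k := by
    intro k hk
    induction k, hk using Nat.le_induction with
    | base => exact fun _ => le_rfl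
    | succ k _ ih =>
      exact fun h => (ih (by omega)).trans (Nat.choose_le_succ_of_lt_half_left (by omega))
  rcases le_or_gt k (n / 2) with h | h
  · exact half k hjk h
  · rw [← Nat.choose_symm (show k ≤ n by omega)]
    exact half (n - k) (by omega) (by omega)

lemma choose_three_le (n k : ℕ) (hn : 7 ≤ n) (h3 : 3 ≤ k) (hk : k + 3 ≤ n) :
    (n : ℤ) * (n - 2) ≤ n.choose k := by
  have h1 := choose_le_choose_mid 3 n k h3 hk
  obtain ⟨m, rfl⟩ : ∃ m, n = m + 3 := ⟨n - 3, by omega⟩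
  have a1 := Nat.add_one_mul_choose_eq (m + 2) 2
  have a2 := Nat.add_one_mul_choose_eq (m + 1) 1
  rw [Nat.choose_one_right] at a2
  zify at *
  push_cast at *
  nlinarith

/-- The case analysis for `n = m + 5` on the outer coordinates
`(x_0, x_1, x_2, x_{n-2}, x_{n-1}, x_n) = (x0, x1, x2, x3, x4, x5)`, with `c = C(n,2)`. The
hypotheses `h0`, `h1`, `hs`, `hd` come from the four test functions, and `hP`, `hN` bound the
positive and the negative part. -/
lemma outer_eq_zero {m c x0 x1 x2 x3 x4 x5 : ℤ} (hm : 0 ≤ m) (c2 : c * 2 = (m + 5) * (m + 4))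
    (l2 : -1 ≤ x2) (u2 : x2 ≤ 1) (l3 : -1 ≤ x3) (u3 : x3 ≤ 1)
    (h0 : x0 + (m + 5) * x1 + c * x2 + c * x3 + (m + 5) * x4 + x5 = 0)
    (h1 : (m + 5) * x1 + c * 2 * x2 + c * (m + 3) * x3 + (m + 5) * (m + 4) * x4
      + (m + 5) * x5 = 0)
    (hs : x1 + x4 = -(m + 3) * (x2 + x3)) (hd : x1 - x4 = -(m + 1) * (x2 - x3))
    (hP : max x0 0 + (m + 5) * max x1 0 + c * max x2 0 + c * max x3 0 + (m + 5) * max x4 0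
      + max x5 0 < (m + 5) * (m + 3))
    (hN : max (-x0) 0 + (m + 5) * max (-x1) 0 + c * max (-x2) 0 + c * max (-x3) 0
      + (m + 5) * max (-x4) 0 + max (-x5) 0 < (m + 5) * (m + 3)) :
    x0 = 0 ∧ x1 = 0 ∧ x2 = 0 ∧ x3 = 0 ∧ x4 = 0 ∧ x5 = 0 := by
  have hc : 0 ≤ c := by nlinarith
  have hm5 : (0 : ℤ) ≤ m + 5 := by linarith
  have m1 := mul_le_mul_of_nonneg_left (le_max_left x1 0) hm5
  have m4 := mul_le_mul_of_nonneg_left (le_max_left x4 0) hm5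
  have n1 := mul_le_mul_of_nonneg_left (le_max_left (-x1) 0) hm5
  have n4 := mul_le_mul_of_nonneg_left (le_max_left (-x4) 0) hm5
  have z0 := le_max_right x0 0
  have z5 := le_max_right x5 0
  have y0 := le_max_right (-x0) 0
  have y5 := le_max_right (-x5) 0
  have z1 := mul_nonneg hm5 (le_max_right x1 0)
  have z4 := mul_nonneg hm5 (le_max_right x4 0)
  have y1 := mul_nonneg hm5 (le_max_right (-x1) 0)
  have y4 := mul_nonneg hm5 (le_max_right (-x4) 0)
  have key : x2 = 0 ∧ x3 = 0 := by
    interval_cases x2 <;> interval_cases x3 <;> norm_num at hs hd hP hN ⊢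
    · obtain rfl : x1 = m + 3 := by linarith
      obtain rfl : x4 = m + 3 := by linarith
      nlinarith
    · obtain rfl : x1 = m + 2 := by linarith
      obtain rfl : x4 = 1 := by linarith
      nlinarith
    · obtain rfl : x1 = m + 1 := by linarith
      obtain rfl : x4 = -(m + 1) := by linarith
      nlinarith
    · obtain rfl : x1 = 1 := by linarith
      obtain rfl : x4 = m + 2 := by linarith
      nlinarith
    · obtain rfl : x1 = -1 := by linarith
      obtain rfl : x4 = -(m + 2) := by linarith
      nlinarith
    · obtain rfl : x1 = -(m + 1) := by linarith
      obtain rfl : x4 = m + 1 := by linarith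
      nlinarith
    · obtain rfl : x1 = -(m + 2) := by linarith
      obtain rfl : x4 = -1 := by linarith
      nlinarith
    · obtain rfl : x1 = -(m + 3) := by linarith
      obtain rfl : x4 = -(m + 3) := by linarith
      nlinarith
  obtain ⟨rfl, rfl⟩ := key
  obtain rfl : x1 = 0 := by linarith
  obtain rfl : x4 = 0 := by linarith
  have g5 : x5 = 0 := by
    have : (m + 5) ≠ 0 := by positivity
    apply mul_left_cancel₀ this
    linear_combination h1
  refine ⟨by linarith, rfl, rfl, rfl, rfl, g5⟩

/-- The lower bound, in contrapositive form and for sequences indexed by `ℕ`: a vector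
orthogonal to the four test functions whose objective value is below `n(n-2)` vanishes. -/
lemma eq_zero_of_lt (n : ℕ) (hn : 4 ≤ n) (X : ℕ → ℤ)
    (h0 : ∑ k ∈ Finset.range (n + 1), (n.choose k : ℤ) * X k = 0)
    (h1 : ∑ k ∈ Finset.range (n + 1), (n.choose k : ℤ) * k * X k = 0)
    (h2 : ∑ k ∈ Finset.range (n + 1), (n.choose k : ℤ) * (k * (n - k)) * X k = 0)
    (h3 : ∑ k ∈ Finset.range (n + 1), (n.choose k : ℤ) * (k * (n - k) * (n - 2 * k)) * X k = 0)
    (hP : ∑ k ∈ Finset.range (n + 1), (n.choose k : ℤ) * max (X k) 0 < n * (n - 2)) :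
    ∀ k ≤ n, X k = 0 := by
  -- The negative part of `y` has the same mass as the positive part.
  have hN : ∑ k ∈ Finset.range (n + 1), (n.choose k : ℤ) * max (-X k) 0 < n * (n - 2) := by
    have : ∑ k ∈ Finset.range (n + 1), (n.choose k : ℤ) * max (-X k) 0 =
        ∑ k ∈ Finset.range (n + 1), (n.choose k : ℤ) * max (X k) 0
        - ∑ k ∈ Finset.range (n + 1), (n.choose k : ℤ) * X k := by
      rw [← Finset.sum_sub_distrib]
      refine Finset.sum_congr rfl fun k _ => ?_
      rw [← mul_sub]
      congr 1
      omega
    rw [this, h0]; simpa using hP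
  have hterm : ∀ k ≤ n, (n.choose k : ℤ) * |X k| < n * (n - 2) := by
    intro k hk
    have hk' : k ∈ Finset.range (n + 1) := by simp; omega
    have s1 := Finset.single_le_sum (f := fun k => (n.choose k : ℤ) * max (X k) 0)
      (fun i _ => by positivity) hk'
    have s2 := Finset.single_le_sum (f := fun k => (n.choose k : ℤ) * max (-X k) 0)
      (fun i _ => by positivity) hk'
    rcases abs_cases (X k) with ⟨h, h'⟩ | ⟨h, h'⟩
    · rw [max_eq_left h'] at s1; rw [h]; linarith
    · rw [max_eq_left (by linarith)] at s2; rw [h]; linarith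
  rcases eq_or_ne n 4 with rfl | hn4
  · simp [Finset.sum_range_succ, Nat.choose] at h0 h1 h2 h3 hP hN
    have : X 0 = 0 ∧ X 1 = 0 ∧ X 2 = 0 ∧ X 3 = 0 ∧ X 4 = 0 := by
      have : X 2 = 0 := by omega
      omega
    intro k hk
    interval_cases k <;> omega
  have hmid : ∀ k, 3 ≤ k → k + 3 ≤ n → X k = 0 := by
    intro k hk3 hkn
    rcases eq_or_ne n 6 with rfl | hn6
    · obtain rfl : k = 3 := by omega
      have t2 := hterm 2 (by norm_num)
      have t3 := hterm 3 (by norm_num)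
      have t4 := hterm 4 (by norm_num)
      simp [Finset.sum_range_succ, Nat.choose] at h2 h3 hP hN t2 t3 t4
      by_contra hne
      have b2 : -1 ≤ X 2 ∧ X 2 ≤ 1 := by constructor <;> (have := abs_lt.1 (show |X 2| < 2 by omega); omega)
      have b3 : -1 ≤ X 3 ∧ X 3 ≤ 1 := by constructor <;> (have := abs_lt.1 (show |X 3| < 2 by omega); omega)
      have b4 : -1 ≤ X 4 ∧ X 4 ≤ 1 := by constructor <;> (have := abs_lt.1 (show |X 4| < 2 by omega); omega)
      obtain ⟨b2, b2'⟩ := b2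
      obtain ⟨b3, b3'⟩ := b3
      obtain ⟨b4, b4'⟩ := b4
      generalize X 2 = x2 at *
      generalize X 3 = x3 at *
      generalize X 4 = x4 at *
      interval_cases x2 <;> interval_cases x3 <;> interval_cases x4 <;> omega
    · by_contra hne
      have c := choose_three_le n k (by omega) hk3 hkn
      have t := hterm k (by omega)
      have := Int.one_le_abs hne
      nlinarith
  obtain ⟨m, rfl⟩ : ∃ m, n = m + 5 := ⟨n - 5, by omega⟩
  have hsplit : ∀ F : ℕ → ℤ, (∀ k, X k = 0 → F k = 0) →
      ∑ k ∈ Finset.range (m + 5 + 1), F k =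
        F 0 + F 1 + F 2 + F (m + 3) + F (m + 4) + F (m + 5) := by
    intro F hF
    rw [Finset.sum_range_succ, Finset.sum_range_succ, Finset.sum_range_succ,
      Finset.sum_range_succ', Finset.sum_range_succ', Finset.sum_range_succ',
      Finset.sum_eq_zero fun k hk => hF _ (hmid _ (by omega) (by simp at hk; omega))]
    ring
  rw [hsplit _ fun k h => by simp [h]] at h0 h1 h2 h3 hP hN
  have t2 := hterm 2 (by omega)
  have t3 := hterm (m + 3) (by omega)
  have c4 : (m + 5).choose (m + 4) = m + 5 := by
    rw [Nat.choose_symm_of_eq_add (show m + 5 = m + 4 + 1 by ring), Nat.choose_one_right]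
  have c3 : (m + 5).choose (m + 3) = (m + 5).choose 2 :=
    Nat.choose_symm_of_eq_add (show m + 5 = m + 3 + 2 by ring)
  have c2 : ((m + 5).choose 2 : ℤ) * 2 = (m + 5) * (m + 4) := by
    have a2 := Nat.add_one_mul_choose_eq (m + 4) 1
    rw [Nat.choose_one_right] at a2
    zify at a2
    linarith
  simp only [c4, c3, Nat.choose_self, Nat.choose_zero_right, Nat.choose_one_right] at h0 h1 h2 h3 hP hN t2 t3
  push_cast at h0 h1 h2 h3 hP hN t2 t3 c2
  have hm : (0 : ℤ) ≤ m := by positivity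
  have hc0 : (0 : ℤ) ≤ (m + 5).choose 2 := by positivity
  generalize ((m + 5).choose 2 : ℤ) = c at h0 h1 h2 h3 hP hN t2 t3 c2 hc0
  have small : ∀ z : ℤ, c * |z| < (m + 5) * (m + 5 - 2) → -1 ≤ z ∧ z ≤ 1 := by
    intro z hz
    rw [← abs_le]
    by_contra hlt
    have : 2 ≤ |z| := by omega
    have := mul_le_mul_of_nonneg_left this hc0
    linarith
  obtain ⟨l2, u2⟩ := small _ t2
  obtain ⟨l3, u3⟩ := small _ t3
  -- The test functions `l(n-l)` and `l(n-l)(n-2l)` on the four coordinates where they are nonzero.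
  have hs : X 1 + X (m + 4) = -(m + 3) * (X 2 + X (m + 3)) := by
    have : ((m : ℤ) + 5) * (m + 4) ≠ 0 := by positivity
    apply mul_left_cancel₀ this
    linear_combination h2 - (m + 3 : ℤ) * (X 2 + X (m + 3)) * c2
  have hd : X 1 - X (m + 4) = -(m + 1) * (X 2 - X (m + 3)) := by
    have : ((m : ℤ) + 5) * (m + 4) * (m + 3) ≠ 0 := by positivity
    apply mul_left_cancel₀ this
    linear_combination h3 - (m + 3 : ℤ) * (m + 1) * (X 2 - X (m + 3)) * c2
  obtain ⟨g0, g1, g2, g3, g4, g5⟩ := outer_eq_zero (x0 := X 0) (x5 := X (m + 5)) hm c2 l2 u2 l3 u3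
    (by linarith) (by linarith) hs hd (by linarith) (by linarith)
  intro k hk
  by_cases hk3 : 3 ≤ k ∧ k + 3 ≤ m + 5
  · exact hmid k hk3.1 hk3.2
  · have : k = 0 ∨ k = 1 ∨ k = 2 ∨ k = m + 3 ∨ k = m + 4 ∨ k = m + 5 := by omega
    rcases this with rfl | rfl | rfl | rfl | rfl | rfl <;> assumption

/-- The optimal vector `(C(n-2,2), -(n-3), 1, 0, …, 0, -1, n-3)` for `n = m + 4`. -/
def optVec (m k : ℕ) : ℤ :=
  if k = 0 then (m + 2).choose 2 else if k = 1 then -(m + 1) else if k = 2 then 1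
  else if k = m + 3 then -1 else if k = m + 4 then m + 1 else 0

lemma sum_optVec (m : ℕ) (F : ℕ → ℤ → ℤ) (hF : ∀ k, F k 0 = 0) :
    ∑ l : Fin (m + 4 + 1), F l (optVec m l) =
      F 0 ((m + 2).choose 2) + F 1 (-(m + 1)) + F 2 1 + F (m + 3) (-1) + F (m + 4) (m + 1) := by
  rw [Fin.sum_univ_eq_sum_range (fun k => F k (optVec m k)), Finset.sum_range_succ,
    Finset.sum_range_succ, Finset.sum_range_succ', Finset.sum_range_succ', Finset.sum_range_succ',
    Finset.sum_eq_zero]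
  · simp [optVec]
    ring
  · intro k hk
    have hk := Finset.mem_range.1 hk
    have : optVec m (k + 1 + 1 + 1) = 0 := by
      simp only [optVec]
      repeat rw [if_neg (by omega)]
    rw [this, hF]

/-- **Integer optimization for the `U(1)` symmetry with `3`-local gates.**  The minimum of
`∑_λ C(n,λ)·max(x_λ,0)` over nonzero integer vectors `x ∈ ℤ^{n+1}` orthogonal to
`c_j = (C(n-3, λ-j))_λ`, `j = 0,1,2,3`, equals `n(n-2)`. -/
theorem u1_3local_integer_optimization (n : ℕ) (hn : 4 ≤ n) :
    IsLeast
      {s : ℤ | ∃ x : Fin (n + 1) → ℤ, x ≠ 0 ∧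
        (∀ j : Fin 4, ∑ l : Fin (n + 1), binomZ (n - 3) ((l : ℤ) - (j : ℤ)) * x l = 0) ∧
        s = ∑ l : Fin (n + 1), (n.choose (l : ℕ) : ℤ) * max (x l) 0}
      ((n : ℤ) * ((n : ℤ) - 2)) := by
  constructor
  · obtain ⟨m, rfl⟩ : ∃ m, n = m + 4 := ⟨n - 4, by omega⟩
    have c2 : ((m + 2).choose 2 : ℤ) * 2 = (m + 2) * (m + 1) := by
      have a2 := Nat.add_one_mul_choose_eq (m + 1) 1
      rw [Nat.choose_one_right] at a2
      zify at a2
      linarith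
    refine ⟨fun l => optVec m l, ?_, ?_, ?_⟩
    · intro h
      have := congrFun h ⟨2, by omega⟩
      simp [optVec] at this
    · intro j
      have c1 : ((m + 1).choose 2 : ℤ) * 2 = (m + 1) * m := by
        have a2 := Nat.add_one_mul_choose_eq m 1
        rw [Nat.choose_one_right] at a2
        zify at a2
        linarith
      have cs : (m + 1).choose m = m + 1 := by simp
      rw [sum_optVec m (fun k z => binomZ (m + 4 - 3) ((k : ℤ) - (j : ℤ)) * z) (by simp)]
      have e : m + 4 - 3 = m + 1 := by omega
      rw [e]
      have top : ∀ i : ℕ, m + 1 < i → ∀ b : ℤ, b = i → binomZ (m + 1) b = 0 := by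
        rintro i hi b rfl
        rw [← choose_eq_binomZ, Nat.choose_eq_zero_of_lt hi]; rfl
      have neg : ∀ b : ℤ, b < 0 → binomZ (m + 1) b = 0 := fun b hb => if_neg (by omega)
      have b0 : binomZ (m + 1) 0 = 1 := by simp [binomZ]
      have b1 : binomZ (m + 1) 1 = m + 1 := by simp [binomZ]
      have b2 : binomZ (m + 1) 2 = (m + 1).choose 2 := by simp [binomZ]
      have bm : binomZ (m + 1) m = m + 1 := by rw [← choose_eq_binomZ, cs]; simp
      have bm1 : binomZ (m + 1) (m + 1) = 1 := by
        have := choose_eq_binomZ (m + 1) (m + 1)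
        rw [Nat.choose_self] at this; push_cast at this; exact this.symm
      have bm2 : binomZ (m + 1) (m + 2) = 0 := top (m + 2) (by omega) _ (by push_cast; ring)
      have bm3 : binomZ (m + 1) (m + 3) = 0 := top (m + 3) (by omega) _ (by push_cast; ring)
      have bm4 : binomZ (m + 1) (m + 4) = 0 := top (m + 4) (by omega) _ (by push_cast; ring)
      have n1 := neg (-1) (by norm_num)
      have n2 := neg (-2) (by norm_num)
      have n3 := neg (-3) (by norm_num)
      generalize binomZ (m + 1) = B at *
      generalize ((m + 2).choose 2 : ℤ) = a at *
      generalize ((m + 1).choose 2 : ℤ) = d at *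
      ring_nf at bm1 bm2 bm3 bm4
      fin_cases j <;> simp <;> ring_nf <;>
        simp only [b0, b1, b2, bm, bm1, bm2, bm3, bm4, n1, n2, n3] <;> linarith
    · rw [sum_optVec m (fun k z => ((m + 4).choose k : ℤ) * max z 0) (by simp)]
      have c4 : ((m + 4).choose 2 : ℤ) * 2 = (m + 4) * (m + 3) := by
        have a2 := Nat.add_one_mul_choose_eq (m + 3) 1
        rw [Nat.choose_one_right] at a2
        zify at a2
        linarith
      have hm : (0 : ℤ) ≤ m := by positivity
      rw [max_eq_left (by positivity), max_eq_right (by linarith), max_eq_left (by norm_num),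
        max_eq_right (by norm_num), max_eq_left (by positivity), Nat.choose_self,
        Nat.choose_zero_right]
      push_cast
      linarith
  · rintro s ⟨x, hx, hc, rfl⟩
    by_contra! hlt
    apply hx
    let X : ℕ → ℤ := fun k => if h : k < n + 1 then x ⟨k, h⟩ else 0
    have hX : ∀ l : Fin (n + 1), x l = X l := fun l => by
      have := l.isLt
      simp only [X, dif_pos this]
    obtain ⟨m, rfl⟩ : ∃ m, n = m + 3 := ⟨n - 3, by omega⟩
    simp only [hX, Nat.add_sub_cancel] at hc hlt
    have d0 := hc 0
    have d1 := hc 1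
    have d2 := hc 2
    have d3 := hc 3
    rw [Fin.sum_univ_eq_sum_range (fun k => ((m + 3).choose k : ℤ) * max (X k) 0)] at hlt
    have conv : ∀ j : ℤ, ∑ l : Fin (m + 3 + 1), binomZ m ((l : ℤ) - j) * X l =
        ∑ k ∈ Finset.range (m + 3 + 1), binomZ m ((k : ℤ) - j) * X k := fun j =>
      Fin.sum_univ_eq_sum_range (fun k => binomZ m ((k : ℤ) - j) * X k) _
    rw [conv] at d0 d1 d2 d3
    -- A combination of the `c_j` is orthogonal to `X`.
    have comb : ∀ (a b c d : ℤ) (G : ℕ → ℤ), (∀ k : ℕ, G k = a * binomZ m (k - 0)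
        + b * binomZ m (k - 1) + c * binomZ m (k - 2) + d * binomZ m (k - 3)) →
        ∑ k ∈ Finset.range (m + 3 + 1), G k * X k = 0 := by
      intro a b c d G hG
      have : ∑ k ∈ Finset.range (m + 3 + 1), G k * X k =
          a * ∑ k ∈ Finset.range (m + 3 + 1), binomZ m ((k : ℤ) - 0) * X k
          + b * ∑ k ∈ Finset.range (m + 3 + 1), binomZ m ((k : ℤ) - 1) * X k
          + c * ∑ k ∈ Finset.range (m + 3 + 1), binomZ m ((k : ℤ) - 2) * X k
          + d * ∑ k ∈ Finset.range (m + 3 + 1), binomZ m ((k : ℤ) - 3) * X k := by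
        simp only [Finset.mul_sum, ← Finset.sum_add_distrib]
        refine Finset.sum_congr rfl fun k _ => ?_
        rw [hG]; ring
      rw [this]
      erw [d0, d1, d2, d3]
      ring
    have key := eq_zero_of_lt (m + 3) hn X
      (comb 1 3 3 1 _ fun k => by linear_combination (tests m k).1)
      (comb 0 (m + 3) (2 * (m + 3)) (m + 3) _ fun k => by linear_combination (tests m k).2.1)
      (comb 0 ((m + 3) * (m + 2)) ((m + 3) * (m + 2)) 0 _ fun k => by
        push_cast; linear_combination (tests m k).2.2.1)
      (comb 0 ((m + 3) * (m + 2) * (m + 1)) (-((m + 3) * (m + 2) * (m + 1))) 0 _ fun k => by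
        push_cast; linear_combination (tests m k).2.2.2)
      hlt
    funext l
    rw [hX]
    exact key l (by omega)
end

section
/- Let n ≥ 9. For a ∈ {0,1,…,⌊n/2⌋} let m_a = C(n,a) − C(n,a−1), and let v_j ∈ ℤ^{⌊n/2⌋+1} for j = 0, 1 have entries (v_j)_a = C(n−2j, a−j) − C(n−2j, a−j−1). Then the minimum of Σ_{a=0}^{⌊n/2⌋} m_a·max(x_a,0) over all nonzero integer vectors x ∈ ℤ^{⌊n/2⌋+1} orthogonal to v_0 and v_1 equals (n−1)(n−3). -/
/-- The multiplicity `C(n,a) - C(n,a-1)`, for an integer index `a`. -/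
def mult (n : ℕ) (a : ℤ) : ℤ := binomZ n a - binomZ n (a - 1)

theorem binomZ_natCast_s14 (n k : ℕ) : binomZ n (k : ℤ) = n.choose k := by
  simp [binomZ]

theorem binomZ_of_neg_s14 (n : ℕ) {a : ℤ} (ha : a < 0) : binomZ n a = 0 := by
  simp [binomZ, not_le.mpr ha]

theorem binomZ_pascal (n : ℕ) (a : ℤ) : binomZ (n + 1) a = binomZ n a + binomZ n (a - 1) := by
  rcases lt_or_ge a 0 with ha | ha
  · rw [binomZ_of_neg_s14 _ ha, binomZ_of_neg_s14 _ ha, binomZ_of_neg_s14 _ (by omega)]; rfl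
  · obtain ⟨k, rfl⟩ := Int.eq_ofNat_of_zero_le ha
    cases k with
    | zero => simp [binomZ]
    | succ k =>
      have h : ((k + 1 : ℕ) : ℤ) - 1 = (k : ℤ) := by push_cast; ring
      rw [h, binomZ_natCast_s14, binomZ_natCast_s14, binomZ_natCast_s14, Nat.choose_succ_succ]
      push_cast; ring

theorem mult_pascal (n : ℕ) (a : ℤ) : mult (n + 1) a = mult n a + mult n (a - 1) := by
  simp only [mult, binomZ_pascal]; ring

theorem mult_natCast_succ (n k : ℕ) :
    mult n ((k + 1 : ℕ) : ℤ) = n.choose (k + 1) - n.choose k := by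
  have h : ((k + 1 : ℕ) : ℤ) - 1 = (k : ℤ) := by push_cast; ring
  rw [mult, h, binomZ_natCast_s14, binomZ_natCast_s14]

theorem mult_zero (n : ℕ) : mult n 0 = 1 := by simp [mult, binomZ]

theorem mult_one (n : ℕ) : mult n 1 = n - 1 := by simp [mult, binomZ]

theorem mult_neg_one (n : ℕ) : mult n (-1) = 0 := by simp [mult, binomZ]

theorem two_mul_mult_two (n : ℕ) : 2 * mult n 2 = n * (n - 3) := by
  induction n with
  | zero => simp [mult, binomZ]
  | succ n ih =>
    rw [mult_pascal, mul_add, ih, show (2 : ℤ) - 1 = 1 by norm_num, mult_one]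
    push_cast; ring

theorem mult_nonneg {n a : ℕ} (h : 2 * a ≤ n) : 0 ≤ mult n a := by
  cases a with
  | zero => simp [mult_zero]
  | succ k =>
    rw [mult_natCast_succ]
    have := Nat.choose_le_succ_of_lt_half_left (r := k) (n := n) (by omega)
    omega

theorem mult_half (k : ℕ) : mult (2 * k + 1) ((k + 1 : ℕ) : ℤ) = 0 := by
  rw [mult_natCast_succ, Nat.choose_symm_half]; ring

/-- Pascal's rule is applied once when `2a < n`. On the boundary `n = 2a` one of its two terms
vanishes, and the other one is expanded once more. -/
theorem mult_lower_bound (n : ℕ) (hn : 11 ≤ n) (a : ℕ) (ha : 3 ≤ a) (han : 2 * a ≤ n) :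
    ((n : ℤ) - 1) * (n - 3) ≤ mult n a := by
  induction n using Nat.strong_induction_on generalizing a with
  | _ n ih =>
  rcases hn.eq_or_lt with rfl | h11
  · have : a ≤ 5 := by omega
    interval_cases a <;> decide +kernel
  obtain ⟨n, rfl⟩ : ∃ m, n = m + 1 := ⟨n - 1, by omega⟩
  obtain ⟨a, rfl⟩ : ∃ b, a = b + 1 := ⟨a - 1, by omega⟩
  have hP := mult_pascal n ((a + 1 : ℕ) : ℤ)
  rw [show ((a + 1 : ℕ) : ℤ) - 1 = (a : ℤ) by push_cast; ring] at hP
  have hnZ : (11 : ℤ) ≤ n := by omega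
  rcases han.eq_or_lt with h2 | h2
  · obtain rfl : n = 2 * a + 1 := by omega
    rw [mult_half, zero_add] at hP
    rcases (show 5 ≤ a by omega).eq_or_lt with rfl | h6
    · decide +kernel
    obtain ⟨a, rfl⟩ : ∃ b, a = b + 1 := ⟨a - 1, by omega⟩
    have hP2 := mult_pascal (2 * (a + 1)) ((a + 1 : ℕ) : ℤ)
    rw [show ((a + 1 : ℕ) : ℤ) - 1 = (a : ℤ) by push_cast; ring] at hP2
    have i1 := ih (2 * (a + 1)) (by omega) (by omega) (a + 1) (by omega) (by omega)
    have i2 := ih (2 * (a + 1)) (by omega) (by omega) a (by omega) (by omega)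
    rw [hP, hP2]
    push_cast at *
    have : (6 : ℤ) ≤ a + 1 := by omega
    nlinarith
  · have i1 := ih n (by omega) (by omega) (a + 1) ha (by omega)
    rw [hP]
    rcases (show 2 ≤ a by omega).eq_or_lt with rfl | h3
    · have := two_mul_mult_two n
      push_cast at *
      nlinarith
    · have i2 := ih n (by omega) (by omega) a (by omega) (by omega)
      push_cast at *
      nlinarith

/-- The objective, for vectors given as functions on `ℕ` read on `{0,…,⌊n/2⌋}`. -/
def objective (n : ℕ) (x : ℕ → ℤ) : ℤ :=
  ∑ a ∈ Finset.range (n / 2 + 1), mult n a * max (x a) 0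

theorem term_le_objective (n : ℕ) (x : ℕ → ℤ) {a : ℕ} (ha : a ≤ n / 2) :
    mult n a * max (x a) 0 ≤ objective n x :=
  Finset.single_le_sum (f := fun a : ℕ => mult n a * max (x a) 0)
    (fun i hi => mul_nonneg (mult_nonneg (by have := Finset.mem_range.mp hi; omega))
      (le_max_right _ _))
    (Finset.mem_range.mpr (by omega))

theorem objective_neg {n : ℕ} {x : ℕ → ℤ}
    (h0 : ∑ a ∈ Finset.range (n / 2 + 1), mult n a * x a = 0) :
    objective n (fun a => - x a) = objective n x := by
  rw [eq_comm, ← sub_eq_zero, ← h0, objective, objective, ← Finset.sum_sub_distrib]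
  refine Finset.sum_congr rfl fun a _ => ?_
  rw [← mul_sub]
  congr 1
  omega

theorem mult_le_objective {n : ℕ} {x : ℕ → ℤ}
    (h0 : ∑ a ∈ Finset.range (n / 2 + 1), mult n a * x a = 0)
    {a : ℕ} (ha : a ≤ n / 2) (hx : x a ≠ 0) : mult n a ≤ objective n x := by
  have hm : 0 ≤ mult n a := mult_nonneg (by omega)
  rcases lt_or_gt_of_ne hx with h | h
  · rw [← objective_neg h0]
    refine le_trans ?_ (term_le_objective n _ ha)
    exact le_mul_of_one_le_right hm (by omega)
  · refine le_trans ?_ (term_le_objective n _ ha)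
    exact le_mul_of_one_le_right hm (by omega)

/-- A sum over `{0,…,⌊n/2⌋}` whose terms vanish from index `3` on has three terms. -/
theorem sum_three {n : ℕ} (hn : 9 ≤ n) (f : ℕ → ℤ) (hf : ∀ a, 3 ≤ a → a ≤ n / 2 → f a = 0) :
    ∑ a ∈ Finset.range (n / 2 + 1), f a = f 0 + f 1 + f 2 := by
  rw [← Finset.sum_subset (s₁ := Finset.range 3)]
  · simp [Finset.sum_range_succ]
  · intro a ha
    simp only [Finset.mem_range] at *
    omega
  · intro a ha ha'
    simp only [Finset.mem_range] at *
    exact hf a (by omega) (by omega)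

/-- The lower bound for vectors supported on `{0,1,2}`. -/
theorem lower_bound_small_support {n : ℕ} (hn : 9 ≤ n) {x : ℕ → ℤ}
    (h0 : ∑ a ∈ Finset.range (n / 2 + 1), mult n a * x a = 0)
    (h1 : ∑ a ∈ Finset.range (n / 2 + 1), mult (n - 2) ((a : ℤ) - 1) * x a = 0)
    (hx : ∃ a ≤ n / 2, x a ≠ 0) (hs : ∀ a, 3 ≤ a → a ≤ n / 2 → x a = 0) :
    ((n : ℤ) - 1) * (n - 3) ≤ objective n x := by
  have hnZ : (9 : ℤ) ≤ n := by omega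
  have hneg := objective_neg h0
  have key := term_le_objective n x (a := 1) (by omega)
  have key' := term_le_objective n (fun a => - x a) (a := 1) (by omega)
  rw [sum_three hn _ (fun a h h' => by rw [hs a h h', mul_zero])] at h0 h1
  have hc : ((n - 2 : ℕ) : ℤ) = n - 2 := by omega
  norm_num [mult_zero, mult_one, mult_neg_one, hc] at h0 h1 key key'
  rw [hneg] at key'
  have e1 : x 1 = -((n - 3) * x 2) := by linarith
  have hx2 : x 2 ≠ 0 := by
    intro h2
    rw [h2, mul_zero, neg_zero] at e1
    rw [h2, e1] at h0
    obtain ⟨a, ha, hxa⟩ := hx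
    rcases lt_or_ge a 3 with h3 | h3
    · interval_cases a
      · exact hxa (by linarith)
      · exact hxa e1
      · exact hxa h2
    · exact hxa (hs a h3 ha)
  -- The entry `x₁ = -(n-3) x₂` alone carries the whole positive part of `x` or of `-x`.
  rcases lt_or_gt_of_ne hx2 with h | h
  · refine le_trans (mul_le_mul_of_nonneg_left ?_ (by omega)) key
    refine le_trans ?_ (le_max_left _ _)
    rw [e1]; nlinarith
  · refine le_trans (mul_le_mul_of_nonneg_left ?_ (by omega)) key'
    refine le_trans ?_ (le_max_left _ _)
    rw [e1]; nlinarith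

theorem lower_bound_nine {x : ℕ → ℤ}
    (h0 : ∑ a ∈ Finset.range (9 / 2 + 1), mult 9 a * x a = 0)
    (h1 : ∑ a ∈ Finset.range (9 / 2 + 1), mult (9 - 2) ((a : ℤ) - 1) * x a = 0)
    (hx : ∃ a, 3 ≤ a ∧ a ≤ 9 / 2 ∧ x a ≠ 0) :
    48 ≤ objective 9 x := by
  have hx' : x 3 ≠ 0 ∨ x 4 ≠ 0 := by
    obtain ⟨a, h3, h4, hxa⟩ := hx
    have : a ≤ 4 := h4
    interval_cases a
    · exact Or.inl hxa
    · exact Or.inr hxa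
  simp [objective, Finset.sum_range_succ, mult, binomZ, Nat.choose] at h0 h1 ⊢
  omega

theorem lower_bound_ten {x : ℕ → ℤ}
    (h0 : ∑ a ∈ Finset.range (10 / 2 + 1), mult 10 a * x a = 0)
    (h1 : ∑ a ∈ Finset.range (10 / 2 + 1), mult (10 - 2) ((a : ℤ) - 1) * x a = 0)
    (hx : ∃ a, 3 ≤ a ∧ a ≤ 10 / 2 ∧ x a ≠ 0) :
    63 ≤ objective 10 x := by
  have hx' : x 3 ≠ 0 ∨ x 4 ≠ 0 ∨ x 5 ≠ 0 := by
    obtain ⟨a, h3, h4, hxa⟩ := hx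
    have : a ≤ 5 := h4
    interval_cases a
    · exact Or.inl hxa
    · exact Or.inr (Or.inl hxa)
    · exact Or.inr (Or.inr hxa)
  simp [objective, Finset.sum_range_succ, mult, binomZ, Nat.choose] at h0 h1 ⊢
  omega

theorem lower_bound {n : ℕ} (hn : 9 ≤ n) {x : ℕ → ℤ}
    (h0 : ∑ a ∈ Finset.range (n / 2 + 1), mult n a * x a = 0)
    (h1 : ∑ a ∈ Finset.range (n / 2 + 1), mult (n - 2) ((a : ℤ) - 1) * x a = 0)
    (hx : ∃ a ≤ n / 2, x a ≠ 0) :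
    ((n : ℤ) - 1) * (n - 3) ≤ objective n x := by
  by_cases hs : ∀ a, 3 ≤ a → a ≤ n / 2 → x a = 0
  · exact lower_bound_small_support hn h0 h1 hx hs
  push Not at hs
  rcases lt_or_ge n 11 with h | h
  · interval_cases n
    · exact lower_bound_nine h0 h1 hs
    · exact lower_bound_ten h0 h1 hs
  · obtain ⟨a, h3, han, hxa⟩ := hs
    exact (mult_lower_bound n h a h3 (by omega)).trans (mult_le_objective h0 han hxa)

/-- The generator `((n-2)(n-3)/2, -(n-3), 1, 0, …)` of the solutions supported on `{0,1,2}`. Its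
entry at `0` is written as `(n-1)(n-3) - m₂`, which avoids a division. -/
def minimizer (n : ℕ) : ℕ → ℤ
  | 0 => (n - 1) * (n - 3) - mult n 2
  | 1 => -(n - 3)
  | 2 => 1
  | _ => 0

theorem minimizer_of_three_le (n : ℕ) {a : ℕ} (ha : 3 ≤ a) : minimizer n a = 0 := by
  obtain ⟨b, rfl⟩ := Nat.exists_eq_add_of_le' ha
  rfl

theorem minimizer_orthogonal_zero {n : ℕ} (hn : 9 ≤ n) :
    ∑ a ∈ Finset.range (n / 2 + 1), mult n a * minimizer n a = 0 := by
  rw [sum_three hn _ (fun a h _ => by rw [minimizer_of_three_le n h, mul_zero])]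
  norm_num [mult_zero, mult_one, minimizer]
  ring

theorem minimizer_orthogonal_one {n : ℕ} (hn : 9 ≤ n) :
    ∑ a ∈ Finset.range (n / 2 + 1), mult (n - 2) ((a : ℤ) - 1) * minimizer n a = 0 := by
  rw [sum_three hn _ (fun a h _ => by rw [minimizer_of_three_le n h, mul_zero])]
  have hc : ((n - 2 : ℕ) : ℤ) = n - 2 := by omega
  norm_num [mult_zero, mult_one, mult_neg_one, minimizer, hc]
  ring

theorem objective_minimizer {n : ℕ} (hn : 9 ≤ n) :
    objective n (minimizer n) = ((n : ℤ) - 1) * (n - 3) := by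
  have hnZ : (9 : ℤ) ≤ n := by omega
  have h2 := two_mul_mult_two n
  have hpos : 0 ≤ minimizer n 0 := by simp only [minimizer]; nlinarith
  have hneg : minimizer n 1 ≤ 0 := by simp only [minimizer]; omega
  rw [objective, sum_three hn _ (fun a h _ => by rw [minimizer_of_three_le n h]; simp),
    max_eq_left hpos, max_eq_right hneg]
  norm_num [mult_zero, minimizer]

/-- **Integer optimization for the `SU(2)` symmetry with `2`- or `3`-local gates.**  With
multiplicities `m_a = C(n,a) - C(n,a-1)` for `a ∈ {0,…,⌊n/2⌋}` and
`(v_j)_a = C(n-2j, a-j) - C(n-2j, a-j-1)` for `j = 0,1`, the minimum of `∑_a m_a·max(x_a,0)`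
over nonzero integer vectors `x` orthogonal to `v_0` and `v_1` equals `(n-1)(n-3)`. -/
theorem su2_23local_integer_optimization (n : ℕ) (hn : 9 ≤ n) :
    IsLeast
      {s : ℤ | ∃ x : Fin (n / 2 + 1) → ℤ, x ≠ 0 ∧
        (∀ j : Fin 2, ∑ a : Fin (n / 2 + 1),
          (binomZ (n - 2 * (j : ℕ)) ((a : ℤ) - (j : ℤ)) -
            binomZ (n - 2 * (j : ℕ)) ((a : ℤ) - (j : ℤ) - 1)) * x a = 0) ∧
        s = ∑ a : Fin (n / 2 + 1), (binomZ n (a : ℤ) - binomZ n ((a : ℤ) - 1)) * max (x a) 0}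
      (((n : ℤ) - 1) * ((n : ℤ) - 3)) := by
  constructor
  · refine ⟨fun a => minimizer n a, fun h => ?_, fun j => ?_, ?_⟩
    · have h2 := congrFun h ⟨2, by omega⟩
      exact one_ne_zero (α := ℤ) h2
    · fin_cases j
      · have h := minimizer_orthogonal_zero hn
        rw [← Fin.sum_univ_eq_sum_range (fun a : ℕ => mult n a * minimizer n a)] at h
        simpa [mult] using h
      · have h := minimizer_orthogonal_one hn
        rw [← Fin.sum_univ_eq_sum_range
          (fun a : ℕ => mult (n - 2) ((a : ℤ) - 1) * minimizer n a)] at h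
        simpa [mult] using h
    · rw [← objective_minimizer hn, objective,
        ← Fin.sum_univ_eq_sum_range (fun a : ℕ => mult n a * max (minimizer n a) 0)]
      rfl
  · rintro s ⟨x, hx, horth, rfl⟩
    -- Extend `x` by zero to a function on `ℕ`.
    let X : ℕ → ℤ := fun a => if h : a < n / 2 + 1 then x ⟨a, h⟩ else 0
    have hX : ∀ a : Fin (n / 2 + 1), X a = x a := fun a => dif_pos a.isLt
    have h0 : ∑ a ∈ Finset.range (n / 2 + 1), mult n a * X a = 0 := by
      rw [← Fin.sum_univ_eq_sum_range (fun a : ℕ => mult n a * X a)]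
      simpa [mult, hX] using horth 0
    have h1 : ∑ a ∈ Finset.range (n / 2 + 1), mult (n - 2) ((a : ℤ) - 1) * X a = 0 := by
      rw [← Fin.sum_univ_eq_sum_range (fun a : ℕ => mult (n - 2) ((a : ℤ) - 1) * X a)]
      simpa [mult, hX] using horth 1
    obtain ⟨a, ha⟩ := Function.ne_iff.mp hx
    have h := lower_bound hn h0 h1 ⟨a, by omega, by rw [hX]; exact ha⟩
    rw [objective, ← Fin.sum_univ_eq_sum_range (fun a : ℕ => mult n a * max (X a) 0)] at h
    simpa only [hX, mult] using h
end
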